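/- arXiv:1409.1530 — 3 statements merged into one kernel-verified Lean document; each statement's English description precedes it below -/
import Mathlib

section
/- In the cyclic sliding puzzle on L cells, suppose a legal move sequence σ returns the blank to its original cell, and let w(σ) denote the winding number of the blank, i.e. (number of moves in which the blank shifts from some cell c to c+1) minus (number of moves in which the blank shifts from some cell c to c−1), divided by L. Then the final configuration is obtained from the initial configuration by the cyclic rotation of the tokens by w(σ) steps in the cyclic ordering of the L−1 non-blank cells: if the non-blank cells are listed in cyclic order as c₁, …, c_{L−1}, then the token initially on c_r ends on c_{r−w(σ) mod (L−1)}. -/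
/-!
The cyclic sliding puzzle on `L ≥ 3` cells `ℤ/L`.

A configuration places `L - 1` distinguishable tokens (indexed by `Fin (L-1)`)
injectively on the `L` cells, leaving exactly one cell, the *blank*, empty.  A
legal move slides the token on a cell adjacent to the blank into the blank, so
the blank shifts to the adjacent cell the token vacated.  Since every cell other
than the blank carries a token, a legal move sequence is just a list of
directions: `true` means the blank shifts from its cell `c` to `c + 1`, and
`false` means it shifts from `c` to `c - 1`.  A state is the pair
`(blank cell, token-position function)`.
-/

namespace CyclicPuzzle

/-- One legal move in direction `d`: the blank at `s.1` shifts to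
`s.1 + 1` (if `d = true`) or `s.1 - 1` (if `d = false`), and the token that
occupied that cell slides onto the old blank cell. -/
def step (L : ℕ) (s : ZMod L × (Fin (L - 1) → ZMod L)) (d : Bool) :
    ZMod L × (Fin (L - 1) → ZMod L) :=
  (s.1 + (if d then 1 else -1),
    fun x => if s.2 x = s.1 + (if d then 1 else -1) then s.1 else s.2 x)

/-- The state reached from the state `s` by executing the legal move sequence `σ`. -/
def run (L : ℕ) (s : ZMod L × (Fin (L - 1) → ZMod L)) (σ : List Bool) :
    ZMod L × (Fin (L - 1) → ZMod L) :=
  σ.foldl (step L) s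

end CyclicPuzzle

theorem aux_ne (m a c : ℕ) (b : ZMod (m+3)) (ha : a < m+3) (hc : c < m+3) (hac : a ≠ c) :
    b + (a : ZMod (m+3)) ≠ b + (c : ZMod (m+3)) := by
  intro h
  have h := add_left_cancel h
  rw [ZMod.natCast_eq_natCast_iff', Nat.mod_eq_of_lt ha, Nat.mod_eq_of_lt hc] at h
  exact hac h

theorem aux_top (m : ℕ) : ((m + 2 : ℕ) : ZMod (m+3)) = -1 := by
  have := ZMod.natCast_self (m+3)
  push_cast at this ⊢
  linear_combination this

theorem aux_val (m k : ℕ) (hk : k < m + 2) : ((k : ZMod (m+2))).val = k :=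
  ZMod.val_cast_of_lt hk

theorem key_true (m : ℕ) (b p : ZMod (m+3)) (r : ZMod (m+2))
    (h : p = b + ((r.val + 1 : ℕ) : ZMod (m+3))) :
    (if p = b + 1 then b else p) = b + 1 + (((r - 1).val + 1 : ℕ) : ZMod (m+3)) := by
  have hlt := ZMod.val_lt r
  obtain ⟨k, hk⟩ : ∃ k, r.val = k := ⟨_, rfl⟩
  have hr : r = (k : ZMod (m+2)) := by rw [← hk, ZMod.natCast_zmod_val]
  rw [hk] at h hlt
  rcases k with _ | k
  · have h1 : (r - 1).val = m + 1 := by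
      rw [hr]
      have : ((0 : ℕ) : ZMod (m+2)) - 1 = ((m + 1 : ℕ) : ZMod (m+2)) := by
        have := ZMod.natCast_self (m+2)
        push_cast at this ⊢
        linear_combination - this
      rw [this, aux_val _ _ (by omega)]
    rw [if_pos (by simpa using h), h1, aux_top]
    ring
  · have h1 : (r - 1).val = k := by
      rw [hr]
      push_cast
      rw [add_sub_cancel_right, aux_val _ _ (by omega)]
    have h2 := aux_ne m (k + 1 + 1) 1 b (by omega) (by omega) (by omega)
    rw [← h, Nat.cast_one] at h2
    rw [if_neg h2, h1, h]
    push_cast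
    ring

theorem key_false (m : ℕ) (b p : ZMod (m+3)) (r : ZMod (m+2))
    (h : p = b + ((r.val + 1 : ℕ) : ZMod (m+3))) :
    (if p = b + -1 then b else p) = b + -1 + (((r + 1).val + 1 : ℕ) : ZMod (m+3)) := by
  have hlt := ZMod.val_lt r
  obtain ⟨k, hk⟩ : ∃ k, r.val = k := ⟨_, rfl⟩
  have hr : r = (k : ZMod (m+2)) := by rw [← hk, ZMod.natCast_zmod_val]
  rw [hk] at h hlt
  by_cases hkm : k = m + 1
  · subst hkm
    have h1 : r + 1 = 0 := by
      rw [hr]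
      have := ZMod.natCast_self (m+2)
      push_cast at this ⊢
      linear_combination this
    rw [if_pos (by rw [h, aux_top]), h1, ZMod.val_zero]
    push_cast
    ring
  · have h1 : (r + 1).val = k + 1 := by
      rw [hr]
      have := aux_val m (k + 1) (by omega)
      rwa [Nat.cast_succ] at this
    have h2 := aux_ne m (k + 1) (m + 2) b (by omega) (by omega) (by omega)
    rw [← h, aux_top] at h2
    rw [if_neg h2, h1, h]
    push_cast
    ring

theorem run_inv (m : ℕ) (σ : List Bool) :
    ∀ (s : ZMod (m+3) × (Fin (m + 3 - 1) → ZMod (m+3))) (x : Fin (m + 3 - 1)) (r : ZMod (m+2)),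
      s.2 x = s.1 + ((r.val + 1 : ℕ) : ZMod (m+3)) →
      (CyclicPuzzle.run (m+3) s σ).2 x = (CyclicPuzzle.run (m+3) s σ).1 +
        (((r - (((σ.count true : ℤ) - (σ.count false : ℤ) : ℤ) : ZMod (m+2))).val + 1 : ℕ)
          : ZMod (m+3)) := by
  induction σ with
  | nil => intro s x r h; simpa [CyclicPuzzle.run] using h
  | cons d σ ih =>
    intro s x r h
    cases d with
    | true =>
      have := ih (CyclicPuzzle.step (m+3) s true) x (r - 1)
        (by simpa [CyclicPuzzle.step] using key_true m s.1 (s.2 x) r h)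
      have e : r - (((((true :: σ).count true : ℕ) : ℤ) - (((true :: σ).count false : ℕ) : ℤ) : ℤ)
          : ZMod (m+2)) = r - 1 - (((σ.count true : ℤ) - (σ.count false : ℤ) : ℤ) : ZMod (m+2)) := by
        simp
        ring
      rw [e]
      exact this
    | false =>
      have := ih (CyclicPuzzle.step (m+3) s false) x (r + 1)
        (by simpa [CyclicPuzzle.step] using key_false m s.1 (s.2 x) r h)
      have e : r - (((((false :: σ).count true : ℕ) : ℤ) - (((false :: σ).count false : ℕ) : ℤ) : ℤ)
          : ZMod (m+2)) = r + 1 - (((σ.count true : ℤ) - (σ.count false : ℤ) : ℤ) : ZMod (m+2)) := by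
        simp
        ring
      rw [e]
      exact this

open CyclicPuzzle in
/-- In the cyclic sliding puzzle on `L ≥ 3` cells, start from
a configuration with blank `b₀` and injective token placement `p₀` avoiding
`b₀`.  Suppose a legal move sequence `σ` returns the blank to `b₀`, and let
`w` be the winding number of the blank, i.e.
`(#moves with blank shift c ↦ c+1) - (#moves with blank shift c ↦ c-1) = w * L`.
Listing the non-blank cells in cyclic order as `c_r = b₀ + r` for
`1 ≤ r ≤ L - 1`, the token initially on `c_r` ends on `c_{r - w mod (L-1)}`.
(Indices of non-blank cells are taken 0-based in `ℤ/(L-1)`: the token on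
`b₀ + (r.val + 1)` ends on `b₀ + ((r - w).val + 1)`.) -/
theorem statement8 (L : ℕ) (hL : 3 ≤ L)
    (b₀ : ZMod L) (p₀ : Fin (L - 1) → ZMod L)
    (hinj : Function.Injective p₀) (hb : ∀ x, p₀ x ≠ b₀)
    (σ : List Bool) (w : ℤ)
    (hret : (run L (b₀, p₀) σ).1 = b₀)
    (hw : (σ.count true : ℤ) - (σ.count false : ℤ) = w * L) :
    ∀ (x : Fin (L - 1)) (r : ZMod (L - 1)),
      p₀ x = b₀ + ((r.val + 1 : ℕ) : ZMod L) →
      (run L (b₀, p₀) σ).2 x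
        = b₀ + (((r - (w : ZMod (L - 1))).val + 1 : ℕ) : ZMod L) := by
  obtain ⟨m, rfl⟩ : ∃ m, L = m + 3 := ⟨L - 3, by omega⟩
  intro x r h
  have key := run_inv m σ (b₀, p₀) x r h
  rw [hret, hw] at key
  have e : ((w * ((m + 3 : ℕ) : ℤ) : ℤ) : ZMod (m+2)) = (w : ZMod (m+2)) := by
    have := ZMod.natCast_self (m+2)
    push_cast at this ⊢
    linear_combination (w : ZMod (m+2)) * this
  rw [e] at key
  exact key
end

section
/- In the cyclic sliding puzzle on L cells, suppose a legal move sequence σ returns the blank to its original cell, and let w(σ) denote the winding number of the blank, i.e. (number of moves in which the blank shifts from some cell c to c+1) minus (number of moves in which the blank shifts from some cell c to c−1), divided by L. Then the final configuration equals the initial configuration (every token is back on its original cell) if and only if w(σ) ≡ 0 (mod L−1). -/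
namespace CyclicPuzzle

lemma val_pred {m : ℕ} (hm : 2 ≤ m) (r : ZMod (m+1)) (h0 : r ≠ 0) :
    (r - 1).val + 1 = r.val := by
  haveI : Fact (1 < m + 1) := ⟨by omega⟩
  have h1 : (1 : ZMod (m+1)).val = 1 := ZMod.val_one _
  have hp : r.val ≠ 0 := by simpa [ZMod.val_eq_zero] using h0
  rw [ZMod.val_sub (by omega), h1]; omega

lemma step_inv {m : ℕ} (hm : 2 ≤ m) (s : ZMod (m+1) × (Fin (m+1-1) → ZMod (m+1)))
    (d : Bool) (x : Fin (m+1-1)) (h : s.2 x ≠ s.1) :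
    (step (m+1) s d).2 x ≠ (step (m+1) s d).1 ∧
    ((((step (m+1) s d).2 x - (step (m+1) s d).1).val : ℕ) : ZMod m)
      = ((s.2 x - s.1).val : ZMod m) - (if d then 1 else -1) := by
  haveI : Fact (1 < m + 1) := ⟨by omega⟩
  have h1 : (1 : ZMod (m+1)).val = 1 := ZMod.val_one _
  have hn : (-1 : ZMod (m+1)).val = m := ZMod.val_neg_one m
  have h10 : (1 : ZMod (m+1)) ≠ 0 := one_ne_zero
  obtain ⟨b, p⟩ := s
  simp only [step] at *
  have hr : p x - b ≠ 0 := sub_ne_zero.mpr h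
  cases d
  · simp only [Bool.false_eq_true, if_false]
    split_ifs with hc
    · have e1 : b - (b + -1) = 1 := by ring
      have e2 : p x - b = -1 := by rw [hc]; ring
      refine ⟨?_, ?_⟩
      · rw [← sub_ne_zero, e1]; exact h10
      · rw [e1, e2, h1, hn]; simp
    · refine ⟨hc, ?_⟩
      have e := val_pred hm (p x - (b + -1)) (sub_ne_zero.mpr hc)
      have e2 : p x - (b + -1) - 1 = p x - b := by ring
      rw [e2] at e
      rw [← e]; push_cast; ring
  · simp only [if_true]
    split_ifs with hc
    · have e1 : b - (b + 1) = -1 := by ring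
      have e2 : p x - b = 1 := by rw [hc]; ring
      refine ⟨?_, ?_⟩
      · rw [← sub_ne_zero, e1]; exact neg_ne_zero.mpr h10
      · rw [e1, e2, h1, hn]; simp
    · refine ⟨hc, ?_⟩
      have e := val_pred hm (p x - b) hr
      have e2 : p x - (b + 1) = p x - b - 1 := by ring
      rw [e2, ← e]; push_cast; ring

lemma run_inv {m : ℕ} (hm : 2 ≤ m) (σ : List Bool) (x : Fin (m+1-1)) :
    ∀ (s : ZMod (m+1) × (Fin (m+1-1) → ZMod (m+1))), s.2 x ≠ s.1 →
    (run (m+1) s σ).2 x ≠ (run (m+1) s σ).1 ∧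
    ((((run (m+1) s σ).2 x - (run (m+1) s σ).1).val : ℕ) : ZMod m)
      = ((s.2 x - s.1).val : ZMod m) - (((σ.count true : ℤ) - (σ.count false : ℤ) : ℤ) : ZMod m) := by
  induction σ with
  | nil => intro s h; simpa [run] using h
  | cons d t ih =>
    intro s h
    obtain ⟨h1, h2⟩ := step_inv hm s d x h
    obtain ⟨h3, h4⟩ := ih _ h1
    refine ⟨h3, ?_⟩
    change ((((run (m+1) (step (m+1) s d) t).2 x - (run (m+1) (step (m+1) s d) t).1).val : ℕ) : ZMod m) = _
    rw [h4, h2]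
    cases d <;> simp <;> ring

end CyclicPuzzle

open CyclicPuzzle in
/-- In the cyclic sliding puzzle on `L ≥ 3` cells, suppose a
legal move sequence `σ` returns the blank to its original cell `b₀`, and let
`w` be the winding number of the blank, i.e.
`(#moves with blank shift c ↦ c+1) - (#moves with blank shift c ↦ c-1) = w * L`.
Then the final configuration equals the initial configuration (every token is
back on its original cell) if and only if `w ≡ 0 (mod L-1)`. -/
theorem statement9 (L : ℕ) (hL : 3 ≤ L)
    (b₀ : ZMod L) (p₀ : Fin (L - 1) → ZMod L)
    (hinj : Function.Injective p₀) (hb : ∀ x, p₀ x ≠ b₀)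
    (σ : List Bool) (w : ℤ)
    (hret : (run L (b₀, p₀) σ).1 = b₀)
    (hw : (σ.count true : ℤ) - (σ.count false : ℤ) = w * L) :
    (run L (b₀, p₀) σ).2 = p₀ ↔ (w : ZMod (L - 1)) = 0 := by
  obtain ⟨m, rfl⟩ : ∃ m, L = m + 1 := ⟨L - 1, by omega⟩
  have hm : 2 ≤ m := by omega
  have key : ∀ x, (((run (m+1) (b₀, p₀) σ).2 x - b₀).val : ZMod m)
      = ((p₀ x - b₀).val : ZMod m) - (w : ZMod m) := by
    intro x
    have h := (run_inv hm σ x (b₀, p₀) (hb x)).2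
    rw [hret, hw] at h
    rw [h]; push_cast; simp
  change _ ↔ (w : ZMod m) = 0
  constructor
  · intro h
    have k := key ⟨0, by omega⟩
    rw [h] at k
    exact sub_eq_self.mp k.symm
  · intro h
    funext x
    have k := key x
    have hne := (run_inv hm σ x (b₀, p₀) (hb x)).1
    rw [hret] at hne
    rw [h, sub_zero, ZMod.natCast_eq_natCast_iff] at k
    have v1 := val_pred hm _ (sub_ne_zero.mpr hne)
    have v2 := val_pred hm _ (sub_ne_zero.mpr (hb x))
    have l1 := ZMod.val_lt ((run (m+1) (b₀, p₀) σ).2 x - b₀)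
    have l2 := ZMod.val_lt (p₀ x - b₀)
    rw [← v1, ← v2] at k
    have k' := Nat.ModEq.add_right_cancel' 1 k
    have k2 := Nat.ModEq.eq_of_lt_of_lt k' (by omega) (by omega)
    have k3 : ((run (m+1) (b₀, p₀) σ).2 x - b₀) = p₀ x - b₀ :=
      ZMod.val_injective _ (by omega)
    exact sub_left_injective k3
end

section
/- In the cyclic sliding puzzle on L cells in which exactly one token is marked and the other L−2 tokens are indistinguishable from one another, suppose a legal move sequence σ returns the blank to its original cell and let w(σ) denote the winding number of the blank, i.e. (number of moves in which the blank shifts from some cell c to c+1) minus (number of moves in which the blank shifts from some cell c to c−1), divided by L. Then the position of the marked token after σ is determined by the residue of w(σ) modulo L−1; in particular, the marked token returns to its original cell if and only if w(σ) ≡ 0 (mod L−1). -/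
namespace CyclicPuzzle

theorem cast_inj (L : ℕ) (a b : ℤ) (ha : 1 ≤ a) (ha' : a ≤ L - 1) (hb : 1 ≤ b)
    (hb' : b ≤ L - 1) (h : (a : ZMod L) = b) : a = b := by
  rw [ZMod.intCast_eq_intCast_iff_dvd_sub] at h
  have := Int.eq_zero_of_abs_lt_dvd h (by rw [abs_lt]; constructor <;> linarith)
  linarith

theorem step_gap (L : ℕ) (hL : 3 ≤ L) (s : ZMod L × (Fin (L - 1) → ZMod L)) (d : Bool)
    (x : Fin (L - 1)) (g : ℤ) (h1 : 1 ≤ g) (h2 : g ≤ L - 1) (h : s.2 x = s.1 + g) :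
    ∃ g' : ℤ, 1 ≤ g' ∧ g' ≤ L - 1 ∧ (step L s d).2 x = (step L s d).1 + g' ∧
      ((L : ℤ) - 1) ∣ g' - g + (if d then 1 else -1) := by
  have hL' : (3 : ℤ) ≤ L := by exact_mod_cast hL
  cases d
  · by_cases hg : g = L - 1
    · refine ⟨1, by linarith, by linarith, ?_, ?_⟩
      · simp [step, h, hg]
      · exact ⟨-1, by simp [hg]; ring⟩
    · refine ⟨g + 1, by linarith, by omega, ?_, by simp⟩
      have : (g : ZMod L) ≠ -1 := by
        intro h'
        exact hg (cast_inj L g (L - 1) h1 h2 (by linarith) le_rfl (by simp [h']))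
      simp [step, h, this]
      ring
  · by_cases hg : g = 1
    · refine ⟨L - 1, by linarith, by linarith, ?_, ?_⟩
      · simp [step, h, hg]
      · simp [hg]
    · refine ⟨g - 1, by omega, by omega, ?_, by simp⟩
      have : (g : ZMod L) ≠ 1 := by
        intro h'
        exact hg (cast_inj L g 1 h1 h2 le_rfl (by linarith) (by simp [h']))
      simp [step, h, this]

theorem run_gap (L : ℕ) (hL : 3 ≤ L) (x : Fin (L - 1)) (σ : List Bool) :
    ∀ (s : ZMod L × (Fin (L - 1) → ZMod L))
    (g : ℤ) (_ : 1 ≤ g) (_ : g ≤ L - 1) (_ : s.2 x = s.1 + g),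
    ∃ g' : ℤ, 1 ≤ g' ∧ g' ≤ L - 1 ∧ (run L s σ).2 x = (run L s σ).1 + g' ∧
      ((L : ℤ) - 1) ∣ g' - g + ((σ.count true : ℤ) - (σ.count false : ℤ)) := by
  induction σ with
  | nil => intro s g h1 h2 h; exact ⟨g, h1, h2, h, by simp⟩
  | cons d σ ih =>
    intro s g h1 h2 h
    obtain ⟨g1, a1, a2, a3, a4⟩ := step_gap L hL s d x g h1 h2 h
    obtain ⟨g2, b1, b2, b3, b4⟩ := ih (step L s d) g1 a1 a2 a3
    refine ⟨g2, b1, b2, b3, ?_⟩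
    have := dvd_add a4 b4
    obtain ⟨k, hk⟩ := this
    refine ⟨k, ?_⟩
    rw [← hk]
    cases d <;> simp <;> ring

theorem gap_eq (L : ℕ) (a b : ℤ) (ha : 1 ≤ a) (ha' : a ≤ L - 1) (hb : 1 ≤ b)
    (hb' : b ≤ L - 1) (h : ((L : ℤ) - 1) ∣ a - b) : a = b := by
  have := Int.eq_zero_of_abs_lt_dvd h (by rw [abs_lt]; constructor <;> linarith)
  linarith

theorem final_gap (L : ℕ) (hL : 3 ≤ L) (b₀ : ZMod L) (p₀ : Fin (L - 1) → ZMod L)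
    (x₀ : Fin (L - 1)) (g : ℤ) (h1 : 1 ≤ g) (h2 : g ≤ L - 1) (h : p₀ x₀ = b₀ + g)
    (σ : List Bool) (w : ℤ) (hr : (run L (b₀, p₀) σ).1 = b₀)
    (hw : (σ.count true : ℤ) - (σ.count false : ℤ) = w * L) :
    ∃ g' : ℤ, 1 ≤ g' ∧ g' ≤ L - 1 ∧ (run L (b₀, p₀) σ).2 x₀ = b₀ + g' ∧
      ((L : ℤ) - 1) ∣ g' - g + w := by
  obtain ⟨g', a1, a2, a3, a4⟩ := run_gap L hL x₀ σ (b₀, p₀) g h1 h2 h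
  refine ⟨g', a1, a2, by rw [a3, hr], ?_⟩
  rw [hw] at a4
  have := dvd_sub a4 (dvd_mul_left ((L : ℤ) - 1) w)
  obtain ⟨k, hk⟩ := this
  exact ⟨k, by linarith⟩

end CyclicPuzzle

open CyclicPuzzle in
/-- In the cyclic sliding puzzle on `L ≥ 3` cells with one
marked token `x₀` (the other `L - 2` tokens being indistinguishable), for any
legal move sequence `σ` returning the blank to its original cell `b₀` with
winding number `w` (i.e. `(#(+1)-moves) - (#(-1)-moves) = w * L`), the final
position of the marked token is determined by the residue of `w` mod `L - 1`;
in particular the marked token is back on its original cell iff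
`w ≡ 0 (mod L-1)`. -/
theorem statement10 (L : ℕ) (hL : 3 ≤ L)
    (b₀ : ZMod L) (p₀ : Fin (L - 1) → ZMod L)
    (hinj : Function.Injective p₀) (hb : ∀ x, p₀ x ≠ b₀)
    (x₀ : Fin (L - 1)) :
    (∀ (σ σ' : List Bool) (w w' : ℤ),
      (run L (b₀, p₀) σ).1 = b₀ → (run L (b₀, p₀) σ').1 = b₀ →
      (σ.count true : ℤ) - (σ.count false : ℤ) = w * L →
      (σ'.count true : ℤ) - (σ'.count false : ℤ) = w' * L →
      (w : ZMod (L - 1)) = (w' : ZMod (L - 1)) →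
      (run L (b₀, p₀) σ).2 x₀ = (run L (b₀, p₀) σ').2 x₀) ∧
    (∀ (σ : List Bool) (w : ℤ),
      (run L (b₀, p₀) σ).1 = b₀ →
      (σ.count true : ℤ) - (σ.count false : ℤ) = w * L →
      ((run L (b₀, p₀) σ).2 x₀ = p₀ x₀ ↔ (w : ZMod (L - 1)) = 0)) := by
  have hc : ((L - 1 : ℕ) : ℤ) = (L : ℤ) - 1 := by
    rw [Nat.cast_sub (by omega)]; simp
  obtain ⟨g, h1, h2, h⟩ : ∃ g : ℤ, 1 ≤ g ∧ g ≤ L - 1 ∧ p₀ x₀ = b₀ + g := by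
    have : NeZero L := ⟨by omega⟩
    refine ⟨((p₀ x₀ - b₀).val : ℤ), ?_, ?_, ?_⟩
    · have : (p₀ x₀ - b₀).val ≠ 0 := by
        rw [Ne, ZMod.val_eq_zero, sub_eq_zero]; exact hb x₀
      omega
    · have := ZMod.val_lt (p₀ x₀ - b₀)
      omega
    · simp
  constructor
  · intro σ σ' w w' hr hr' hw hw' e
    obtain ⟨a, a1, a2, a3, a4⟩ := final_gap L hL b₀ p₀ x₀ g h1 h2 h σ w hr hw
    obtain ⟨b, b1, b2, b3, b4⟩ := final_gap L hL b₀ p₀ x₀ g h1 h2 h σ' w' hr' hw'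
    rw [ZMod.intCast_eq_intCast_iff_dvd_sub, hc] at e
    have : a = b := by
      refine gap_eq L a b a1 a2 b1 b2 ?_
      have := dvd_add (dvd_sub a4 b4) e
      obtain ⟨k, hk⟩ := this
      exact ⟨k, by linarith⟩
    rw [a3, b3, this]
  · intro σ w hr hw
    obtain ⟨a, a1, a2, a3, a4⟩ := final_gap L hL b₀ p₀ x₀ g h1 h2 h σ w hr hw
    rw [(CharP.intCast_eq_zero_iff (ZMod (L - 1)) (L - 1) w), hc, a3, h]
    constructor
    · intro e
      have := cast_inj L a g a1 a2 h1 h2 (add_left_cancel e)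
      simpa [this] using a4
    · intro e
      have : a = g := by
        refine gap_eq L a g a1 a2 h1 h2 ?_
        have := dvd_sub a4 e
        obtain ⟨k, hk⟩ := this
        exact ⟨k, by linarith⟩
      rw [this]
end
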